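/- Let n ≥ 4 and 1 ≤ p ≤ n − 2, and let J_p = {α ∈ Reg(ORCT_n) : |Im α| = p}. Then J_p is contained in the subsemigroup generated by J_{p+1}; that is, every regular order-preserving or order-reversing full contraction of [n] of rank p is a product of such elements of rank p + 1. -/

import Mathlib

/-!
A regular element of `ORCT n` of rank `d + 1` is, up to composing with the reversal of the chain,
a ramp `x ↦ a + min (x - c) d`: constant up to `c`, of slope one on `[c, c + d]`, constant
afterwards (`exists_eq_up`). Indeed, if `αβα = α` with `α` monotone of image `[a, b]`, then `β`
takes `a`, `b` to points at distance at most `b - a`, and `α`, being a contraction, is forced to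
have slope one between those points.

Ramps of rank `d + 1` arise as products of two ramps of rank `d + 2`, by letting the image of the
first factor overshoot the sloped part of the second by one, on the left or on the right. This gives
all ramps with `c ≥ 1` and `a` not maximal, or `a ≥ 1` and `c` not maximal. The ramp `(c, a)` is the
product of `(c, 1)` and `(1, a)`, and both of these are covered because `d + 3 ≤ n`.
Order-reversing elements need no separate treatment, since reversing the last factor of a product
reverses the whole product.
-/

/-- `α` is a (full) contraction of the chain `{1, …, n}` (modelled as `Fin n`):
`|xα - yα| ≤ |x - y|` for all `x, y`. -/
def IsContraction {n : ℕ} (α : Function.End (Fin n)) : Prop :=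
  ∀ x y : Fin n, |((α x : ℕ) : ℤ) - ((α y : ℕ) : ℤ)| ≤ |((x : ℕ) : ℤ) - ((y : ℕ) : ℤ)|

/-- `OCT n`: the order-preserving full contractions of the chain. -/
def OCT (n : ℕ) : Set (Function.End (Fin n)) :=
  {α | IsContraction α ∧ Monotone α}

/-- `ORCT n`: the order-preserving or order-reversing full contractions of the chain. -/
def ORCT (n : ℕ) : Set (Function.End (Fin n)) :=
  {α | IsContraction α ∧ (Monotone α ∨ Antitone α)}

/-- The regular elements of `OCT n`. -/
def RegOCT (n : ℕ) : Set (Function.End (Fin n)) :=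
  {α | α ∈ OCT n ∧ ∃ β ∈ OCT n, α * β * α = α}

/-- The regular elements of `ORCT n`. -/
def RegORCT (n : ℕ) : Set (Function.End (Fin n)) :=
  {α | α ∈ ORCT n ∧ ∃ β ∈ ORCT n, α * β * α = α}

/-- `|Im α|`, the rank of a transformation. -/
noncomputable def imCard {n : ℕ} (α : Function.End (Fin n)) : ℕ :=
  (Set.range α).ncard

/-- `J_p`: the elements of `Reg(ORCT_n)` of rank exactly `p`. -/
def Jp (n p : ℕ) : Set (Function.End (Fin n)) :=
  {α | α ∈ RegORCT n ∧ imCard α = p}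

/-- `R_η`: the order-preserving elements of `J_p` whose image is `{1, …, p}`
(i.e. `{0, …, p-1}` in `Fin n`). -/
def RetaJ (n p : ℕ) : Set (Function.End (Fin n)) :=
  {α | α ∈ Jp n p ∧ Monotone α ∧ Set.range α = {x : Fin n | (x : ℕ) < p}}

/-- `L_{δ*}`: the order-reversing elements of `J_p` whose kernel classes are
`{1}, …, {p-1}, {p, …, n}` (in `Fin n`: singletons `{0}, …, {p-2}` together with the
block of indices `≥ p - 1`). -/
def LdeltaStar (n p : ℕ) : Set (Function.End (Fin n)) :=
  {α | α ∈ Jp n p ∧ Antitone α ∧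
    ∀ x y : Fin n, α x = α y ↔ (x = y ∨ (p - 1 ≤ (x : ℕ) ∧ p - 1 ≤ (y : ℕ)))}

/-- The ramp of rank `d + 1` with image `[a, a + d]` which has slope one on `[c, c + d]` and is
constant on either side. The subtraction `x - c` is truncated, so the value is `a` for `x ≤ c`. -/
def up (n d c a : ℕ) (h : a + d < n) : Function.End (Fin n) :=
  fun x => ⟨a + min ((x : ℕ) - c) d, by omega⟩

theorem up_val {n d c a : ℕ} (h : a + d < n) (x : Fin n) :
    ((up n d c a h x : Fin n) : ℕ) = a + min ((x : ℕ) - c) d := rfl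

theorem end_mul_apply {n : ℕ} (α β : Function.End (Fin n)) (x : Fin n) :
    (α * β) x = α (β x) := rfl

/-- The reversal `x ↦ n - 1 - x` of the chain (in `Fin n`). -/
def revEnd (n : ℕ) : Function.End (Fin n) := Fin.rev

theorem revEnd_val {n : ℕ} (x : Fin n) : ((revEnd n x : Fin n) : ℕ) = n - (x + 1) :=
  Fin.val_rev x

theorem revEnd_mul_revEnd_mul {n : ℕ} (α : Function.End (Fin n)) :
    revEnd n * (revEnd n * α) = α := by
  funext x
  exact Fin.rev_rev (α x)

theorem up_mem_ORCT {n d c a : ℕ} (h : a + d < n) : up n d c a h ∈ ORCT n := by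
  refine ⟨fun x y => ?_, Or.inl fun x y hxy => ?_⟩
  · simp only [up]
    rcases abs_cases (((a + min ((x : ℕ) - c) d : ℕ) : ℤ) - ((a + min ((y : ℕ) - c) d : ℕ) : ℤ))
      with h1 | h1 <;>
    rcases abs_cases (((x : ℕ) : ℤ) - ((y : ℕ) : ℤ)) with h2 | h2 <;> omega
  · have : (x : ℕ) ≤ y := hxy
    simp only [up, Fin.mk_le_mk]
    omega

theorem imCard_up {n d c a : ℕ} (h : a + d < n) (hc : c + d < n) :
    imCard (up n d c a h) = d + 1 := by
  have hr : Set.range (up n d c a h) =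
      ((Finset.Icc (⟨a, by omega⟩ : Fin n) ⟨a + d, h⟩ : Finset (Fin n)) : Set (Fin n)) := by
    ext y
    simp only [Finset.coe_Icc, Set.mem_Icc, Fin.le_def]
    constructor
    · rintro ⟨x, rfl⟩
      rw [up_val]
      omega
    · rintro ⟨h1, h2⟩
      refine ⟨⟨c + (y - a), by omega⟩, Fin.ext ?_⟩
      rw [up_val]
      simp only
      omega
  rw [imCard, hr, Set.ncard_coe_finset, Fin.card_Icc]
  simp only
  omega

theorem up_mem_Jp {n d c a : ℕ} (h : a + d < n) (hc : c + d < n) :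
    up n d c a h ∈ Jp n (d + 1) := by
  refine ⟨⟨up_mem_ORCT h, up n d a c hc, up_mem_ORCT hc, ?_⟩, imCard_up h hc⟩
  funext x
  apply Fin.ext
  simp only [end_mul_apply, up_val]
  omega

theorem revEnd_mem_ORCT (n : ℕ) : revEnd n ∈ ORCT n := by
  refine ⟨fun x y => ?_, Or.inr fun x y hxy => Fin.rev_le_rev.mpr hxy⟩
  rw [revEnd_val, revEnd_val]
  rcases abs_cases (((n - (x + 1) : ℕ) : ℤ) - ((n - (y + 1) : ℕ) : ℤ)) with h1 | h1 <;>
  rcases abs_cases (((x : ℕ) : ℤ) - ((y : ℕ) : ℤ)) with h2 | h2 <;> omega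

theorem mul_mem_ORCT {n : ℕ} {α β : Function.End (Fin n)} (hα : α ∈ ORCT n) (hβ : β ∈ ORCT n) :
    α * β ∈ ORCT n := by
  refine ⟨fun x y => (hα.1 _ _).trans (hβ.1 x y), ?_⟩
  rcases hα.2 with h1 | h1 <;> rcases hβ.2 with h2 | h2
  · exact Or.inl (h1.comp h2)
  · exact Or.inr (h1.comp_antitone h2)
  · exact Or.inr (h1.comp_monotone h2)
  · exact Or.inl (h1.comp h2)

theorem revEnd_mul_mem_Jp {n p : ℕ} {α : Function.End (Fin n)} (hα : α ∈ Jp n p) :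
    revEnd n * α ∈ Jp n p := by
  obtain ⟨⟨h1, β, hβ, h2⟩, h3⟩ := hα
  refine ⟨⟨mul_mem_ORCT (revEnd_mem_ORCT n) h1, β * revEnd n,
    mul_mem_ORCT hβ (revEnd_mem_ORCT n), ?_⟩, ?_⟩
  · calc revEnd n * α * (β * revEnd n) * (revEnd n * α)
        = revEnd n * (α * β * (revEnd n * (revEnd n * α))) := by simp only [mul_assoc]
      _ = revEnd n * α := by rw [revEnd_mul_revEnd_mul, h2]
  · rw [← h3, imCard, imCard]
    have : Set.range (revEnd n * α) = Fin.rev '' Set.range α := Set.range_comp Fin.rev α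
    rw [this, Set.ncard_image_of_injective _ Fin.rev_injective]

/-- Reversing the factor applied last reverses a whole product. -/
theorem revEnd_mul_mem_closure {n p : ℕ} {α : Function.End (Fin n)}
    (hα : α ∈ Subsemigroup.closure (Jp n p)) :
    revEnd n * α ∈ Subsemigroup.closure (Jp n p) := by
  induction hα using Subsemigroup.closure_induction with
  | mem x hx => exact Subsemigroup.subset_closure (revEnd_mul_mem_Jp hx)
  | mul x y hx hy ihx _ =>
    rw [← mul_assoc]
    exact mul_mem ihx hy

/-- Every monotone element of `J_{d+1}` is a ramp. -/
theorem exists_eq_up {n d : ℕ} (hn : 0 < n) {α : Function.End (Fin n)} (hα : α ∈ Jp n (d + 1))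
    (hm : Monotone α) : ∃ c a, ∃ h : a + d < n, c + d < n ∧ α = up n d c a h := by
  obtain ⟨⟨⟨hcon, _⟩, β, ⟨hβ, _⟩, hreg⟩, hcard⟩ := hα
  set z : Fin n := ⟨0, hn⟩
  set l : Fin n := ⟨n - 1, by omega⟩
  have hz : α (β (α z)) = α z := congrFun hreg z
  have hl : α (β (α l)) = α l := congrFun hreg l
  have hzl : (α z : ℕ) ≤ α l := hm (Fin.le_def.mpr (Nat.zero_le _))
  have hb := hβ (α l) (α z)
  have ha := hcon (β (α l)) (β (α z))
  rw [hz, hl] at ha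
  have hle : (β (α z) : ℕ) ≤ β (α l) := by
    by_contra hlt
    push Not at hlt
    have h1 : α (β (α l)) ≤ α (β (α z)) := hm (Fin.le_def.mpr hlt.le)
    rw [hz, hl] at h1
    have h2 : α l = α z := le_antisymm h1 hzl
    rw [h2] at hlt
    exact lt_irrefl _ hlt
  rw [abs_of_nonneg (by omega), abs_of_nonneg (by omega)] at ha hb
  -- `β` preserves the distance between the endpoints of the image of `α`.
  have hc : (β (α z) : ℕ) + ((α l : ℕ) - α z) = β (α l) := by omega
  have h : (α z : ℕ) + ((α l : ℕ) - α z) < n := by omega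
  have hc' : (β (α z) : ℕ) + ((α l : ℕ) - α z) < n := by omega
  have key : α = up n ((α l : ℕ) - α z) (β (α z)) (α z) h := by
    funext x
    apply Fin.ext
    have h1 : (α z : ℕ) ≤ α x := hm (Fin.le_def.mpr (Nat.zero_le _))
    have h2 : (α x : ℕ) ≤ α l := hm (Fin.le_def.mpr (by simp only [l]; omega))
    have h3 := hcon x (β (α z))
    have h4 := hcon (β (α l)) x
    have h5 : (x : ℕ) ≤ β (α z) → (α x : ℕ) ≤ α (β (α z)) := fun hx => hm hx
    have h6 : (β (α l) : ℕ) ≤ x → (α (β (α l)) : ℕ) ≤ α x := fun hx => hm hx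
    rw [hz] at h3 h5
    rw [hl] at h4 h6
    rw [abs_of_nonneg (by omega)] at h3 h4
    simp only [up]
    rcases abs_cases (((x : ℕ) : ℤ) - ((β (α z) : ℕ) : ℤ)) with h7 | h7 <;>
    rcases abs_cases (((β (α l) : ℕ) : ℤ) - ((x : ℕ) : ℤ)) with h8 | h8 <;> omega
  have hd : (α l : ℕ) - α z = d := by
    have := imCard_up h hc'
    rw [← key, hcard] at this
    omega
  clear_value z l
  subst hd
  exact ⟨β (α z), α z, h, hc', key⟩

/-- The image `[0, d + 1]` of the first factor overshoots the sloped part `[1, d + 2]` of the second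
on the left. -/
theorem up_succ_left_mem {n d c a : ℕ} (hd : d + 2 < n) (h : a + d < n) (ha : a + (d + 1) < n)
    (hc : c + (d + 1) < n) :
    up n d (c + 1) a h ∈ Subsemigroup.closure (Jp n (d + 2)) := by
  have : up n d (c + 1) a h = up n (d + 1) 1 a ha * up n (d + 1) c 0 (by omega) := by
    funext x
    apply Fin.ext
    simp only [end_mul_apply, up_val]
    omega
  rw [this]
  exact mul_mem (Subsemigroup.subset_closure (up_mem_Jp _ (by omega)))
    (Subsemigroup.subset_closure (up_mem_Jp _ hc))

/-- The image `[1, d + 2]` of the first factor overshoots the sloped part `[0, d + 1]` of the second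
on the right. -/
theorem up_succ_right_mem {n d c a : ℕ} (hd : d + 2 < n) (h : a + 1 + d < n)
    (hc : c + (d + 1) < n) :
    up n d c (a + 1) h ∈ Subsemigroup.closure (Jp n (d + 2)) := by
  have : up n d c (a + 1) h =
      up n (d + 1) 0 a (by omega) * up n (d + 1) c 1 (by omega) := by
    funext x
    apply Fin.ext
    simp only [end_mul_apply, up_val]
    omega
  rw [this]
  exact mul_mem (Subsemigroup.subset_closure (up_mem_Jp _ (by omega)))
    (Subsemigroup.subset_closure (up_mem_Jp _ hc))

theorem up_mem_closure {n d c a : ℕ} (hd : d + 2 < n) (h : a + d < n) (hc : c + d < n) :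
    up n d c a h ∈ Subsemigroup.closure (Jp n (d + 2)) := by
  have : up n d c a h = up n d 1 a h * up n d c 1 (by omega) := by
    funext x
    apply Fin.ext
    simp only [end_mul_apply, up_val]
    omega
  rw [this]
  refine mul_mem ?_ ?_
  · rcases a with _ | a
    · exact up_succ_left_mem (c := 0) hd h (by omega) (by omega)
    · exact up_succ_right_mem hd h (by omega)
  · rcases c with _ | c
    · exact up_succ_right_mem (a := 0) hd (by omega) (by omega)
    · exact up_succ_left_mem hd (by omega) (by omega) (by omega)

/-- for `n ≥ 4` and `1 ≤ p ≤ n - 2`, `J_p` is contained in the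
subsemigroup generated by `J_{p+1}`. -/
theorem stmt_14 (n p : ℕ) (hn : 4 ≤ n) (hp1 : 1 ≤ p) (hp : p ≤ n - 2) :
    Jp n p ⊆ (Subsemigroup.closure (Jp n (p + 1)) : Set (Function.End (Fin n))) := by
  obtain ⟨d, rfl⟩ : ∃ d, p = d + 1 := ⟨p - 1, by omega⟩
  have hmono : ∀ α ∈ Jp n (d + 1), Monotone α → α ∈ Subsemigroup.closure (Jp n (d + 2)) := by
    intro α hα hm
    obtain ⟨c, a, h, hc, rfl⟩ := exists_eq_up (by omega) hα hm
    exact up_mem_closure (by omega) h hc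
  intro α hα
  rcases hα.1.1.2 with hm | hm
  · exact hmono α hα hm
  · have := hmono (revEnd n * α) (revEnd_mul_mem_Jp hα) fun x y hxy => Fin.rev_le_rev.mpr (hm hxy)
    have := revEnd_mul_mem_closure this
    rwa [revEnd_mul_revEnd_mul] at this
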